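/- Let V_r := φ(C^{r+1}_*) ⊂ ℝ^r and let Z_{r,m} be an m-element subset of V_r chosen uniformly at random. Then α(r+1, m) = P[0 ∉ conv(Z_{r,m}) | Z_{r,m} ∩ (−Z_{r,m}) = ∅]. -/

import Mathlib

open Finset Filter MeasureTheory

open scoped Classical

noncomputable section

/-- The vertex set `{0,1}^d` of the 0/1-cube, as a finite subset of `ℝ^d`. -/
def cube01 (d : ℕ) : Finset (Fin d → ℝ) :=
  (Finset.univ : Finset (Fin d → Bool)).image (fun f i => if f i then 1 else 0)

/-- The vertex set `{-1,+1}^d` of the `±1`-cube, as a finite subset of `ℝ^d`. -/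
def pmCube (d : ℕ) : Finset (Fin d → ℝ) :=
  (Finset.univ : Finset (Fin d → Bool)).image (fun f i => if f i then 1 else -1)

/-- The all-one vector `𝟙 ∈ ℝ^d`. -/
def allOne (d : ℕ) : Fin d → ℝ := fun _ => 1

/-- `C^d_* = {-1,+1}^d \ {-𝟙, 𝟙}`. -/
def pmCubeStar (d : ℕ) : Finset (Fin d → ℝ) :=
  (pmCube d) \ {-(allOne d), allOne d}

/-- `{v,w}` spans an edge (a one-dimensional face) of the polytope `P`:
`v ≠ w` and the segment `[v,w]` is an (exposed) face of `P`. -/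
def IsEdge {d : ℕ} (P : Set (Fin d → ℝ)) (v w : Fin d → ℝ) : Prop :=
  v ≠ w ∧ IsExposed ℝ P (segment ℝ v w)

/-- The number of edges of the graph of the polytope `conv X`. -/
noncomputable def edgeCount {d : ℕ} (X : Finset (Fin d → ℝ)) : ℕ :=
  ((X.powersetCard 2).filter (fun e =>
      ∃ v w, e = {v, w} ∧ IsEdge (convexHull ℝ (X : Set (Fin d → ℝ))) v w)).card

/-- The density of the graph of the polytope `conv X` (whose vertex set is `X`
when `X` consists of 0/1- or `±1`-points): number of edges divided by `C(|X|,2)`. -/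
noncomputable def graphDensity {d : ℕ} (X : Finset (Fin d → ℝ)) : ℝ :=
  (edgeCount X : ℝ) / (X.card.choose 2 : ℝ)

/-- The expected graph-density of the convex hull of a uniformly random
`n`-element subset of `{0,1}^d`. -/
noncomputable def expDensity (d n : ℕ) : ℝ :=
  (∑ X ∈ (cube01 d).powersetCard n, graphDensity X) /
    (((cube01 d).powersetCard n).card : ℝ)

/-- The Hamming distance of `v, w ∈ ℝ^d`. -/
def hdist {d : ℕ} (v w : Fin d → ℝ) : ℕ :=
  (Finset.univ.filter (fun i => v i ≠ w i)).card

/-- `C(v,w)`: the points of the `±1`-cube agreeing with `v` and `w` wherever these agree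
(the vertex set of the smallest face of the cube containing `v` and `w`). -/
def cubeFace {d : ℕ} (v w : Fin d → ℝ) : Finset (Fin d → ℝ) :=
  (pmCube d).filter (fun x => ∀ i, v i = w i → x i = v i)

/-- `C_*(v,w) = C(v,w) \ {v,w}`. -/
def cubeFaceStar {d : ℕ} (v w : Fin d → ℝ) : Finset (Fin d → ℝ) :=
  (cubeFace v w) \ {v, w}

/-- The long-edge probability `τ(k,m)`: the probability that for a uniformly random
`m`-element subset `Y ⊆ C^k_*`, `conv Y ∩ conv{-𝟙,𝟙} = ∅`. -/
noncomputable def tau (k m : ℕ) : ℝ :=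
  ((((pmCubeStar k).powersetCard m).filter (fun Y =>
      convexHull ℝ (Y : Set (Fin k → ℝ)) ∩ segment ℝ (-(allOne k)) (allOne k) = ∅)).card : ℝ) /
    ((((pmCubeStar k).powersetCard m)).card : ℝ)

/-- `Y ∩ (-Y) = ∅`. -/
def NoAntipodal {k : ℕ} (Y : Finset (Fin k → ℝ)) : Prop := ∀ y ∈ Y, -y ∉ Y

/-- `α(k,m)`: the conditional probability that `conv Y ∩ conv{-𝟙,𝟙} = ∅`
given `Y ∩ (-Y) = ∅`, for a uniformly random `m`-element subset `Y ⊆ C^k_*`. -/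
noncomputable def alpha (k m : ℕ) : ℝ :=
  ((((pmCubeStar k).powersetCard m).filter (fun (Y : Finset (Fin k → ℝ)) =>
      convexHull ℝ (Y : Set (Fin k → ℝ)) ∩ segment ℝ (-(allOne k)) (allOne k) = ∅ ∧
        NoAntipodal Y)).card : ℝ) /
    ((((pmCubeStar k).powersetCard m).filter (fun Y => NoAntipodal Y)).card : ℝ)

/-- The sample space for a uniformly random `n`-element subset `X ⊆ {-1,+1}^d`
together with a uniformly random `2`-element subset `{v,w} ⊆ X`. -/
def edgeSpace (d n : ℕ) : Finset (Finset (Fin d → ℝ) × Finset (Fin d → ℝ)) :=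
  (((pmCube d).powersetCard n) ×ˢ ((pmCube d).powersetCard 2)).filter (fun p => p.2 ⊆ p.1)

/-- The event that the chosen pair `{v,w}` is an edge of `conv X`. -/
def EdgeEvent {d : ℕ} (p : Finset (Fin d → ℝ) × Finset (Fin d → ℝ)) : Prop :=
  ∃ v w, p.2 = {v, w} ∧ IsEdge (convexHull ℝ (p.1 : Set (Fin d → ℝ))) v w

/-- The event that the chosen pair `{v,w}` satisfies `dist(v,w) = k`. -/
def DistEvent {d : ℕ} (k : ℕ) (p : Finset (Fin d → ℝ) × Finset (Fin d → ℝ)) : Prop :=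
  ∃ v w, v ≠ w ∧ p.2 = {v, w} ∧ hdist v w = k

/-- The event that the chosen pair `{v,w}` satisfies `dist(v,w) = k` and
`#(X ∩ C_*(v,w)) = m`. -/
def DistCapEvent {d : ℕ} (k m : ℕ) (p : Finset (Fin d → ℝ) × Finset (Fin d → ℝ)) : Prop :=
  ∃ v w, v ≠ w ∧ p.2 = {v, w} ∧ hdist v w = k ∧ (p.1 ∩ cubeFaceStar v w).card = m

/-- The edge probability `π(d,n)`. -/
noncomputable def piEdge (d n : ℕ) : ℝ :=
  (((edgeSpace d n).filter (fun p => EdgeEvent p)).card : ℝ) / ((edgeSpace d n).card : ℝ)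

/-- The conditional edge probability `π_k(d,n)` given `dist(v,w) = k`. -/
noncomputable def piEdgeK (d n k : ℕ) : ℝ :=
  (((edgeSpace d n).filter (fun p => EdgeEvent p ∧ DistEvent k p)).card : ℝ) /
    (((edgeSpace d n).filter (fun p => DistEvent k p)).card : ℝ)

/-- `φ : ℝ^{r+1} → ℝ^r`: the orthogonal projection onto the hyperplane
`H_𝟙 = {x : 𝟙ᵀx = 0}` (namely `x ↦ x - ((𝟙ᵀx)/(r+1))·𝟙`), followed by the
projection to the first `r` coordinates. -/
noncomputable def phi (r : ℕ) (x : Fin (r + 1) → ℝ) : Fin r → ℝ :=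
  fun i => x i.castSucc - (∑ j, x j) / (r + 1 : ℝ)

/-- The vector configuration `V_r = φ(C^{r+1}_*)`. -/
noncomputable def Vr (r : ℕ) : Finset (Fin r → ℝ) := (pmCubeStar (r + 1)).image (phi r)

/-- The half configuration `V_r^+ = φ({v ∈ C^{r+1}_* : v_{r+1} = +1})`. -/
noncomputable def VrPlus (r : ℕ) : Finset (Fin r → ℝ) :=
  (((pmCubeStar (r + 1)).filter (fun v => v (Fin.last r) = 1))).image (phi r)

/-- The number of sign vectors `ε ∈ {-1,+1}^S` with `0 ∉ conv{ε_s · s : s ∈ S}`. -/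
noncomputable def signCount {r : ℕ} (S : Finset (Fin r → ℝ)) : ℕ :=
  ((Finset.univ : Finset (↥S → Bool)).filter (fun ε =>
      (0 : Fin r → ℝ) ∉ convexHull ℝ
        (Set.range fun s : ↥S => (if ε s then (1 : ℝ) else -1) • (s : Fin r → ℝ)))).card

/-- `α(S)`: the probability that `0 ∉ conv{ε_s · s : s ∈ S}` for a uniformly random
sign vector `ε ∈ {-1,+1}^S`. -/
noncomputable def alphaSet {r : ℕ} (S : Finset (Fin r → ℝ)) : ℝ :=
  (signCount S : ℝ) / ((Finset.univ : Finset (↥S → Bool)).card : ℝ)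

/-- The complement `ℝ^r \ ⋃_{s ∈ S} H(s)` of the hyperplane arrangement `ℋ(S)`. -/
def arrComplement {r : ℕ} (S : Finset (Fin r → ℝ)) : Set (Fin r → ℝ) :=
  {x | ∀ s ∈ S, ∑ i, s i * x i ≠ 0}

/-- `χ(S)`: the number of chambers (connected components of the complement)
of the hyperplane arrangement `ℋ(S)`. -/
noncomputable def chi {r : ℕ} (S : Finset (Fin r → ℝ)) : ℕ :=
  Nat.card (ConnectedComponents ↥(arrComplement S))

/-- `b(p,q) = ∑_{i=0}^p C(q,i)`. -/
def bFn (p q : ℕ) : ℕ := ∑ i ∈ Finset.range (p + 1), q.choose i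

/-- `φ` as a linear map. -/
def phiL (r : ℕ) : (Fin (r + 1) → ℝ) →ₗ[ℝ] (Fin r → ℝ) where
  toFun := phi r
  map_add' x y := by
    ext i
    simp only [phi, Pi.add_apply, Finset.sum_add_distrib]
    ring
  map_smul' c x := by
    ext i
    simp only [phi, Pi.smul_apply, smul_eq_mul, ← Finset.mul_sum, RingHom.id_apply]
    ring

lemma phiL_apply (r : ℕ) (x : Fin (r + 1) → ℝ) : phiL r x = phi r x := rfl

lemma phi_eq_zero_iff (r : ℕ) (x : Fin (r + 1) → ℝ) :
    phi r x = 0 ↔ ∃ t : ℝ, ∀ i, x i = t := by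
  have hr : (r + 1 : ℝ) ≠ 0 := by positivity
  constructor
  · intro h
    have h1 : ∀ i : Fin r, x i.castSucc = (∑ j, x j) / (r + 1 : ℝ) := by
      intro i
      have := congrFun h i
      simp only [phi, Pi.zero_apply] at this
      linarith
    refine ⟨(∑ j, x j) / (r + 1 : ℝ), fun i => ?_⟩
    refine Fin.lastCases ?_ h1 i
    have h2 : ∑ j, x j = r * ((∑ j, x j) / (r + 1 : ℝ)) + x (Fin.last r) := by
      conv_lhs => rw [Fin.sum_univ_castSucc, Finset.sum_congr rfl (fun i _ => h1 i)]
      simp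
    have h3 : (r + 1 : ℝ) * ((∑ j, x j) / (r + 1 : ℝ)) = ∑ j, x j := by field_simp
    linarith
  · rintro ⟨t, ht⟩
    ext i
    simp only [phi, ht, Finset.sum_const, Finset.card_univ, Fintype.card_fin, nsmul_eq_mul,
      Pi.zero_apply]
    push_cast
    field_simp
    ring

lemma mem_pmCube_iff {d : ℕ} (x : Fin d → ℝ) : x ∈ pmCube d ↔ ∀ i, x i = 1 ∨ x i = -1 := by
  simp only [pmCube, Finset.mem_image, Finset.mem_univ, true_and]
  constructor
  · rintro ⟨f, rfl⟩ i
    by_cases h : f i <;> simp [h]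
  · intro h
    refine ⟨fun i => decide (x i = 1), ?_⟩
    ext i
    rcases h i with h | h <;> simp [h]
    norm_num

lemma mem_star_iff {d : ℕ} (x : Fin d → ℝ) : x ∈ pmCubeStar d ↔
    (∀ i, x i = 1 ∨ x i = -1) ∧ x ≠ -(allOne d) ∧ x ≠ allOne d := by
  simp [pmCubeStar, mem_pmCube_iff]

lemma neg_mem_star {d : ℕ} {x : Fin d → ℝ} (h : x ∈ pmCubeStar d) : -x ∈ pmCubeStar d := by
  rw [mem_star_iff] at *
  obtain ⟨h1, h2, h3⟩ := h
  refine ⟨fun i => ?_, fun h => h3 (neg_injective h), fun h => h2 (by rw [← h, neg_neg])⟩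
  rcases h1 i with h | h <;> simp [h]

lemma phi_injOn (r : ℕ) : Set.InjOn (phi r) (pmCubeStar (r + 1)) := by
  intro x hx y hy hxy
  rw [Finset.mem_coe, mem_star_iff] at hx hy
  have h0 : phi r (x - y) = 0 := by
    rw [← phiL_apply, map_sub, phiL_apply, phiL_apply, hxy, sub_self]
  obtain ⟨t, ht⟩ := (phi_eq_zero_iff r _).1 h0
  simp only [Pi.sub_apply] at ht
  by_contra hne
  have ht0 : t ≠ 0 := by
    rintro rfl
    exact hne (funext fun i => by linarith [ht i])
  rcases lt_or_gt_of_ne ht0 with h | h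
  · apply hx.2.1
    ext i
    simp only [Pi.neg_apply, allOne]
    rcases hx.1 i with h1 | h1
    · rcases hy.1 i with h2 | h2 <;> linarith [ht i]
    · exact h1
  · apply hx.2.2
    ext i
    simp only [allOne]
    rcases hx.1 i with h1 | h1
    · exact h1
    · rcases hy.1 i with h2 | h2 <;> linarith [ht i]

lemma noAntipodal_image {r : ℕ} {Y : Finset (Fin (r + 1) → ℝ)} (hY : Y ⊆ pmCubeStar (r + 1)) :
    NoAntipodal Y ↔ NoAntipodal (Y.image (phi r)) := by
  have hneg : ∀ x, phi r (-x) = - phi r x := fun x => map_neg (phiL r) x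
  constructor
  · intro h z hz hz'
    obtain ⟨y, hy, rfl⟩ := Finset.mem_image.1 hz
    obtain ⟨y', hy', he⟩ := Finset.mem_image.1 hz'
    rw [← hneg] at he
    have := phi_injOn r (hY hy') (neg_mem_star (hY hy)) he
    exact h y hy (this ▸ hy')
  · intro h y hy hy'
    exact h _ (Finset.mem_image_of_mem _ hy) (hneg y ▸ Finset.mem_image_of_mem _ hy')

lemma segment_iff {d : ℕ} (x : Fin d → ℝ) : x ∈ segment ℝ (-(allOne d)) (allOne d) ↔
    ∃ t : ℝ, -1 ≤ t ∧ t ≤ 1 ∧ ∀ i, x i = t := by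
  constructor
  · rintro ⟨a, b, ha, hb, hab, rfl⟩
    refine ⟨b - a, by linarith, by linarith, fun i => ?_⟩
    simp [allOne]
    ring
  · rintro ⟨t, h1, h2, h⟩
    refine ⟨(1 - t) / 2, (1 + t) / 2, by linarith, by linarith, by ring, ?_⟩
    ext i
    simp [allOne, h]
    ring

lemma hull_bounds {d : ℕ} {Y : Finset (Fin d → ℝ)} (hY : Y ⊆ pmCubeStar d) {x : Fin d → ℝ}
    (hx : x ∈ convexHull ℝ (Y : Set (Fin d → ℝ))) : x ∈ Set.Icc (-1 : Fin d → ℝ) 1 := by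
  refine convexHull_min ?_ (convex_Icc _ _) hx
  intro y hy
  have := (mem_star_iff y).1 (hY hy)
  constructor <;> intro i <;> rcases this.1 i with h | h <;> simp [h]

lemma hull_iff {r : ℕ} {Y : Finset (Fin (r + 1) → ℝ)} (hY : Y ⊆ pmCubeStar (r + 1)) :
    convexHull ℝ (Y : Set (Fin (r + 1) → ℝ)) ∩
      segment ℝ (-(allOne (r + 1))) (allOne (r + 1)) = ∅ ↔
    (0 : Fin r → ℝ) ∉ convexHull ℝ ((Y.image (phi r) : Finset (Fin r → ℝ)) : Set (Fin r → ℝ)) := by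
  have himg : convexHull ℝ ((Y.image (phi r) : Finset (Fin r → ℝ)) : Set (Fin r → ℝ)) =
      phi r '' convexHull ℝ (Y : Set (Fin (r + 1) → ℝ)) := by
    rw [Finset.coe_image]
    exact ((phiL r).image_convexHull _).symm
  rw [himg, Set.eq_empty_iff_forall_notMem]
  constructor
  · rintro h ⟨x, hx, hx0⟩
    obtain ⟨t, ht⟩ := (phi_eq_zero_iff r x).1 hx0
    have hb := hull_bounds hY hx
    refine h x ⟨hx, (segment_iff x).2 ⟨t, ?_, ?_, ht⟩⟩
    · rw [← ht 0]; exact hb.1 0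
    · rw [← ht 0]; exact hb.2 0
  · rintro h x ⟨hx, hs⟩
    obtain ⟨t, -, -, ht⟩ := (segment_iff x).1 hs
    exact h ⟨x, hx, (phi_eq_zero_iff r x).2 ⟨t, ht⟩⟩

lemma card_transfer (r m : ℕ) (P : Finset (Fin (r + 1) → ℝ) → Prop)
    (Q : Finset (Fin r → ℝ) → Prop) [DecidablePred P] [DecidablePred Q]
    (h : ∀ Y, Y ⊆ pmCubeStar (r + 1) → (P Y ↔ Q (Y.image (phi r)))) :
    (((pmCubeStar (r + 1)).powersetCard m).filter P).card =
      (((Vr r).powersetCard m).filter Q).card := by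
  have hc : ∀ Y, Y ⊆ pmCubeStar (r + 1) → (Y.image (phi r)).card = Y.card := fun Y hY =>
    Finset.card_image_of_injOn ((phi_injOn r).mono (by exact_mod_cast hY))
  refine Finset.card_bij (fun Y _ => Y.image (phi r)) ?_ ?_ ?_
  · intro Y hY
    simp only [Finset.mem_filter, Finset.mem_powersetCard] at hY ⊢
    obtain ⟨⟨h1, h2⟩, h3⟩ := hY
    exact ⟨⟨Finset.image_subset_image h1, (hc Y h1).trans h2⟩, (h Y h1).1 h3⟩
  · intro Y hY Y' hY' he
    simp only [Finset.mem_filter, Finset.mem_powersetCard] at hY hY'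
    have he' : phi r '' (Y : Set (Fin (r + 1) → ℝ)) = phi r '' (Y' : Set (Fin (r + 1) → ℝ)) := by
      rw [← Finset.coe_image, ← Finset.coe_image]
      exact congrArg _ he
    have := ((phi_injOn r).image_eq_image_iff (by exact_mod_cast hY.1.1)
      (by exact_mod_cast hY'.1.1)).1 he'
    exact_mod_cast this
  · intro Z hZ
    simp only [Finset.mem_filter, Finset.mem_powersetCard] at hZ
    obtain ⟨⟨h1, h2⟩, h3⟩ := hZ
    obtain ⟨Y, hY, rfl⟩ := Finset.subset_image_iff.1 h1
    have hY' : Y ⊆ pmCubeStar (r + 1) := by exact_mod_cast hY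
    refine ⟨Y, ?_, rfl⟩
    simp only [Finset.mem_filter, Finset.mem_powersetCard]
    exact ⟨⟨hY', (hc Y hY').symm.trans h2⟩, (h Y hY').2 h3⟩

-- STATEMENT 8
theorem statement8 (r m : ℕ) :
    alpha (r + 1) m =
      ((((Vr r).powersetCard m).filter (fun (Z : Finset (Fin r → ℝ)) =>
          (0 : Fin r → ℝ) ∉ convexHull ℝ (Z : Set (Fin r → ℝ)) ∧ NoAntipodal Z)).card : ℝ) /
        ((((Vr r).powersetCard m).filter (fun Z => NoAntipodal Z)).card : ℝ) := by
  unfold alpha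
  congr 2
  · refine card_transfer r m _ _ ?_
    exact fun Y hY => and_congr (hull_iff hY) (noAntipodal_image hY)
  · refine card_transfer r m _ _ ?_
    exact fun Y hY => noAntipodal_image hY

end
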